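/- arXiv:2512.14326 — 3 statements merged into one kernel-verified Lean document; each statement's English description precedes it below -/
import Mathlib

section
/- The following are equivalent for a universal class K: (i) K has the strong epimorphism surjectivity property; (ii) for every pair of finitely generated algebras A ≤ B with A, B ∈ K, the dominion d_K(A,B) equals A. Moreover, when K is a quasivariety, the algebra B in (ii) may additionally be assumed to be finitely presented in K. -/
namespace Impl

open FirstOrder Language

universe u v

/-- A bundled algebra (first-order structure) for the language `L`. -/
structure Alg (L : FirstOrder.Language.{u, u}) : Type (u + 1) where
  carrier : Type u
  [str : L.Structure carrier]

attribute [instance] Alg.str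

variable {L : FirstOrder.Language.{u, u}}

/-- The direct product of a family of algebras. -/
def Alg.pi {ι : Type u} (A : ι → Alg L) : Alg L where
  carrier := ∀ i, (A i).carrier
  str :=
    { funMap := fun {k} f v i => Structure.funMap f fun j => v j i
      RelMap := fun {k} r v => ∀ i, Structure.RelMap r fun j => v j i }

/-- The binary direct product of two algebras. -/
def Alg.prod (A B : Alg L) : Alg L where
  carrier := A.carrier × B.carrier
  str :=
    { funMap := fun {k} f v =>
        (Structure.funMap f fun j => (v j).1, Structure.funMap f fun j => (v j).2)
      RelMap := fun {k} r v =>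
        Structure.RelMap r (fun j => (v j).1) ∧ Structure.RelMap r fun j => (v j).2 }

/-- The ultraproduct of a family of algebras with respect to an ultrafilter. -/
def Alg.uprod {ι : Type u} (F : Ultrafilter ι) (A : ι → Alg L) : Alg L where
  carrier := Filter.Product (F : Filter ι) fun i => (A i).carrier
  str := inferInstance

/-- Closure under isomorphic copies. -/
def ClosedUnderIso (K : Set (Alg L)) : Prop :=
  ∀ A B : Alg L, A ∈ K → Nonempty (A.carrier ≃[L] B.carrier) → B ∈ K

/-- Closure under subalgebras (up to the identification of a subalgebra with an embedding). -/
def ClosedUnderSub (K : Set (Alg L)) : Prop :=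
  ∀ A B : Alg L, B ∈ K → Nonempty (A.carrier ↪[L] B.carrier) → A ∈ K

/-- Closure under direct products. -/
def ClosedUnderProd (K : Set (Alg L)) : Prop :=
  ∀ (ι : Type u) (A : ι → Alg L), (∀ i, A i ∈ K) → Alg.pi A ∈ K

/-- Closure under finite direct products. -/
def ClosedUnderFinProd (K : Set (Alg L)) : Prop :=
  ∀ (ι : Type u), Finite ι → ∀ A : ι → Alg L, (∀ i, A i ∈ K) → Alg.pi A ∈ K

/-- Closure under homomorphic images. -/
def ClosedUnderHomImg (K : Set (Alg L)) : Prop :=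
  ∀ A B : Alg L, A ∈ K → ∀ h : A.carrier →[L] B.carrier, Function.Surjective h → B ∈ K

/-- Closure under ultraproducts. -/
def ClosedUnderUprod (K : Set (Alg L)) : Prop :=
  ∀ (ι : Type u) (F : Ultrafilter ι) (A : ι → Alg L), (∀ i, A i ∈ K) → Alg.uprod F A ∈ K

/-- A universal class: a class closed under isomorphic copies, subalgebras and ultraproducts. -/
def IsUniversalClass (K : Set (Alg L)) : Prop :=
  ClosedUnderIso K ∧ ClosedUnderSub K ∧ ClosedUnderUprod K

/-- A quasivariety: a class closed under isomorphic copies, subalgebras, direct products and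
ultraproducts. -/
def IsQuasivariety (K : Set (Alg L)) : Prop :=
  ClosedUnderIso K ∧ ClosedUnderSub K ∧ ClosedUnderProd K ∧ ClosedUnderUprod K

/-- A variety: a class closed under homomorphic images, subalgebras and direct products. -/
def IsVariety (K : Set (Alg L)) : Prop :=
  ClosedUnderHomImg K ∧ ClosedUnderSub K ∧ ClosedUnderProd K

/-- The least quasivariety containing `K`. -/
def QGen (K : Set (Alg L)) : Set (Alg L) :=
  ⋂₀ { M : Set (Alg L) | IsQuasivariety M ∧ K ⊆ M }

/-- The least variety containing `K`. -/
def VGen (K : Set (Alg L)) : Set (Alg L) :=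
  ⋂₀ { M : Set (Alg L) | IsVariety M ∧ K ⊆ M }

/-- An elementary class: the class of all models of some first-order theory. -/
def IsElementary (K : Set (Alg L)) : Prop :=
  ∃ T : L.Theory, ∀ A : Alg L, A ∈ K ↔ ∀ φ ∈ T, A.carrier ⊨ φ

/-- Finite conjunctions of equations (with `⊤` as the empty conjunction). -/
inductive IsConjEq {α : Type v} : ∀ {k : ℕ}, L.BoundedFormula α k → Prop
  | top {k} : IsConjEq (⊤ : L.BoundedFormula α k)
  | equal {k} (t₁ t₂ : L.Term (α ⊕ Fin k)) : IsConjEq (BoundedFormula.equal t₁ t₂)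
  | inf {k} {φ ψ : L.BoundedFormula α k} : IsConjEq φ → IsConjEq ψ → IsConjEq (φ ⊓ ψ)

/-- Positive quantifier-free formulas: built from equations, `⊤` and `⊥` using `⊓` and `⊔`. -/
inductive IsPosQF {α : Type v} : ∀ {k : ℕ}, L.BoundedFormula α k → Prop
  | falsum {k} : IsPosQF (⊥ : L.BoundedFormula α k)
  | top {k} : IsPosQF (⊤ : L.BoundedFormula α k)
  | equal {k} (t₁ t₂ : L.Term (α ⊕ Fin k)) : IsPosQF (BoundedFormula.equal t₁ t₂)
  | inf {k} {φ ψ : L.BoundedFormula α k} : IsPosQF φ → IsPosQF ψ → IsPosQF (φ ⊓ ψ)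
  | sup {k} {φ ψ : L.BoundedFormula α k} : IsPosQF φ → IsPosQF ψ → IsPosQF (φ ⊔ ψ)

/-- Primitive positive (pp) formulas: existentially quantified finite conjunctions of
equations. -/
inductive IsPP {α : Type v} : ∀ {k : ℕ}, L.BoundedFormula α k → Prop
  | of_conjEq {k} {φ : L.BoundedFormula α k} : IsConjEq φ → IsPP φ
  | ex {k} {φ : L.BoundedFormula α (k + 1)} : IsPP φ → IsPP φ.ex

/-- Existential positive formulas: existentially quantified positive quantifier-free
formulas. -/
inductive IsExistPos {α : Type v} : ∀ {k : ℕ}, L.BoundedFormula α k → Prop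
  | of_posQF {k} {φ : L.BoundedFormula α k} : IsPosQF φ → IsExistPos φ
  | ex {k} {φ : L.BoundedFormula α (k + 1)} : IsExistPos φ → IsExistPos φ.ex

/-- Two formulas are equivalent in a class of algebras. -/
def EquivOn (K : Set (Alg L)) {α : Type v} (φ ψ : L.Formula α) : Prop :=
  ∀ A : Alg L, A ∈ K → ∀ x : α → A.carrier, φ.Realize x ↔ ψ.Realize x

/-- A formula is preserved by homomorphisms in `K`. -/
def PreservedByHomsOn (K : Set (Alg L)) {α : Type v} (φ : L.Formula α) : Prop :=
  ∀ A B : Alg L, A ∈ K → B ∈ K → ∀ (h : A.carrier →[L] B.carrier) (x : α → A.carrier),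
    φ.Realize x → φ.Realize fun a => h (x a)

/-- A formula is preserved by direct products in `K`. -/
def PreservedByProdsOn (K : Set (Alg L)) {α : Type v} (φ : L.Formula α) : Prop :=
  ∀ (ι : Type u) (A : ι → Alg L), (∀ i, A i ∈ K) → ∀ x : α → (Alg.pi A).carrier,
    (∀ i, φ.Realize fun a => x a i) → φ.Realize x

/-- An `n`-ary partial function on a class of algebras `K`: a family assigning to each member of
`K` an `n`-ary partial function on its carrier. -/
def PartialFunOn (K : Set (Alg L)) (n : ℕ) :=
  ∀ (A : Alg L), A ∈ K → ((Fin n → A.carrier) →. A.carrier)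

/-- A partial function on `K` is defined by the formula `φ(x₁, …, xₙ, y)` (the last variable
being the output) when its graph on each member of `K` is the solution set of `φ`. -/
def DefinedBy {K : Set (Alg L)} {n : ℕ} (f : PartialFunOn K n)
    (φ : L.Formula (Fin (n + 1))) : Prop :=
  ∀ (A : Alg L) (hA : A ∈ K) (x : Fin n → A.carrier) (b : A.carrier),
    b ∈ f A hA x ↔ φ.Realize (Fin.snoc x b)

/-- The formula `φ(x₁, …, xₙ, y)` is functional in `K`: for all inputs there is at most one
output satisfying it. -/
def FunctionalIn (K : Set (Alg L)) {n : ℕ} (φ : L.Formula (Fin (n + 1))) : Prop :=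
  ∀ A : Alg L, A ∈ K → ∀ (x : Fin n → A.carrier) (b₁ b₂ : A.carrier),
    φ.Realize (Fin.snoc x b₁) → φ.Realize (Fin.snoc x b₂) → b₁ = b₂

/-- A partial function on `K` is an operation of `K` when it is preserved by all homomorphisms
between members of `K`. -/
def IsOperationOn {K : Set (Alg L)} {n : ℕ} (f : PartialFunOn K n) : Prop :=
  ∀ (A B : Alg L) (hA : A ∈ K) (hB : B ∈ K) (h : A.carrier →[L] B.carrier)
    (x : Fin n → A.carrier) (b : A.carrier),
    b ∈ f A hA x → h b ∈ f B hB fun i => h (x i)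

/-- A partial function on `K` is implicit when it is defined by some formula. -/
def IsImplicit {K : Set (Alg L)} {n : ℕ} (f : PartialFunOn K n) : Prop :=
  ∃ φ : L.Formula (Fin (n + 1)), DefinedBy f φ

/-- An implicit operation of `K`: a partial function that is both implicit and an operation. -/
def IsImplicitOp {K : Set (Alg L)} {n : ℕ} (f : PartialFunOn K n) : Prop :=
  IsImplicit f ∧ IsOperationOn f

/-- An implicit operation is extendable when every tuple in every member of `K` lies in the
domain of the operation in some extension inside `K`. -/
def Extendable {K : Set (Alg L)} {n : ℕ} (f : PartialFunOn K n) : Prop :=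
  ∀ (A : Alg L) (hA : A ∈ K) (x : Fin n → A.carrier),
    ∃ (B : Alg L) (hB : B ∈ K) (e : A.carrier ↪[L] B.carrier),
      (f B hB fun i => e (x i)).Dom

/-- The dominion of a subset `s` of `M` relative to the class `K`. -/
def dominion (K : Set (Alg L)) (M : Type u) [L.Structure M] (s : Set M) : Set M :=
  { b | ∀ C : Alg L, C ∈ K → ∀ g h : M →[L] C.carrier, (∀ a ∈ s, g a = h a) → g b = h b }

/-- The strong epimorphism surjectivity property. -/
def StrongES (K : Set (Alg L)) : Prop :=
  ∀ (A B : Alg L), A ∈ K → B ∈ K → ∀ (f : A.carrier →[L] B.carrier) (b : B.carrier),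
    b ∉ Set.range f →
      ∃ C : Alg L, C ∈ K ∧ ∃ g h : B.carrier →[L] C.carrier,
        (∀ a : A.carrier, g (f a) = h (f a)) ∧ g b ≠ h b

/-- The weak epimorphism surjectivity property: every `K`-epimorphism between finitely
generated members of `K` is surjective. -/
def WeakES (K : Set (Alg L)) : Prop :=
  ∀ (A B : Alg L), A ∈ K → B ∈ K →
    Structure.FG L A.carrier → Structure.FG L B.carrier →
      ∀ f : A.carrier →[L] B.carrier,
        (∀ C : Alg L, C ∈ K → ∀ g h : B.carrier →[L] C.carrier,
          (∀ a : A.carrier, g (f a) = h (f a)) → g = h) →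
        Function.Surjective f

/-- The amalgamation property. -/
def HasAmalgamation (K : Set (Alg L)) : Prop :=
  ∀ (A B C : Alg L), A ∈ K → B ∈ K → C ∈ K →
    ∀ (f : A.carrier ↪[L] B.carrier) (g : A.carrier ↪[L] C.carrier),
      ∃ D : Alg L, D ∈ K ∧ ∃ (f' : B.carrier ↪[L] D.carrier) (g' : C.carrier ↪[L] D.carrier),
        ∀ a : A.carrier, f' (f a) = g' (g a)

/-- A finitely presented member of `K`: an algebra in `K` with a finite presentation, phrased
through the usual universal property of `T(X)/Cg_K(Y)`. -/
def FinitelyPresentedIn (K : Set (Alg L)) (B : Alg L) : Prop :=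
  B ∈ K ∧ ∃ (m : ℕ) (Y : Finset (L.Term (Fin m) × L.Term (Fin m))) (b : Fin m → B.carrier),
    Substructure.closure L (Set.range b) = ⊤ ∧
    (∀ p ∈ Y, p.1.realize b = p.2.realize b) ∧
    ∀ C : Alg L, C ∈ K → ∀ x : Fin m → C.carrier,
      (∀ p ∈ Y, p.1.realize x = p.2.realize x) →
        ∃ g : B.carrier →[L] C.carrier, ∀ i, g (b i) = x i

/-- Subdirectly irreducible relative to `K`. -/
def IsRSI (K : Set (Alg L)) (A : Alg L) : Prop :=
  A ∈ K ∧ ∀ (ι : Type u) (B : ι → Alg L), (∀ i, B i ∈ K) →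
    ∀ h : A.carrier ↪[L] (Alg.pi B).carrier,
      (∀ i, Function.Surjective fun a => h a i) →
        ∃ i, Function.Bijective fun a => h a i

/-- Finitely subdirectly irreducible relative to `K`. -/
def IsRFSI (K : Set (Alg L)) (A : Alg L) : Prop :=
  A ∈ K ∧ ∀ (ι : Type u), Finite ι → ∀ B : ι → Alg L, (∀ i, B i ∈ K) →
    ∀ h : A.carrier ↪[L] (Alg.pi B).carrier,
      (∀ i, Function.Surjective fun a => h a i) →
        ∃ i, Function.Bijective fun a => h a i

/-- A congruence on an algebra: an equivalence relation compatible with all the operations. -/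
def IsCongruenceOn (A : Alg L) (θ : A.carrier → A.carrier → Prop) : Prop :=
  Equivalence θ ∧
    ∀ (k : ℕ) (f : L.Functions k) (x y : Fin k → A.carrier),
      (∀ i, θ (x i) (y i)) → θ (Structure.funMap f x) (Structure.funMap f y)

/-- The quotient of an algebra by (the setoid of) an equivalence relation; when the relation is
a congruence this is the quotient algebra. -/
noncomputable def Alg.quot (A : Alg L) (θ : A.carrier → A.carrier → Prop) (h : Equivalence θ) :
    Alg L where
  carrier := Quotient (⟨θ, h⟩ : Setoid A.carrier)
  str :=
    { funMap := fun {k} f v => Quotient.mk _ (Structure.funMap f fun i => (v i).out)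
      RelMap := fun {k} r v => Structure.RelMap r fun i => (v i).out }

/-- A `K`-congruence of `A`: a congruence whose quotient lies in `K`. -/
def IsRelCong (K : Set (Alg L)) (A : Alg L) (θ : A.carrier → A.carrier → Prop) : Prop :=
  ∃ h : IsCongruenceOn A θ, Alg.quot A θ h.1 ∈ K

/-- The join of two relations in the lattice of `K`-congruences of `A`. -/
def relCongJoin (K : Set (Alg L)) (A : Alg L)
    (θ φ : A.carrier → A.carrier → Prop) (x y : A.carrier) : Prop :=
  ∀ ρ : A.carrier → A.carrier → Prop, IsRelCong K A ρ →
    (∀ a b, θ a b → ρ a b) → (∀ a b, φ a b → ρ a b) → ρ x y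

/-- Relative congruence distributivity: the lattice of `K`-congruences of each member of `K`
is distributive. -/
def RelCongDistributive (K : Set (Alg L)) : Prop :=
  ∀ A : Alg L, A ∈ K → ∀ θ φ ψ : A.carrier → A.carrier → Prop,
    IsRelCong K A θ → IsRelCong K A φ → IsRelCong K A ψ →
      ∀ x y : A.carrier,
        (θ x y ∧ relCongJoin K A φ ψ x y) ↔
          relCongJoin K A (fun a b => θ a b ∧ φ a b) (fun a b => θ a b ∧ ψ a b) x y

/-- The join of two relations in the lattice of congruences of `A`. -/
def congJoin (A : Alg L) (θ φ : A.carrier → A.carrier → Prop) (x y : A.carrier) : Prop :=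
  ∀ ρ : A.carrier → A.carrier → Prop, IsCongruenceOn A ρ →
    (∀ a b, θ a b → ρ a b) → (∀ a b, φ a b → ρ a b) → ρ x y

/-- Congruence permutability for all members of a class. -/
def CongPermutableClass (K : Set (Alg L)) : Prop :=
  ∀ A : Alg L, A ∈ K → ∀ θ φ : A.carrier → A.carrier → Prop,
    IsCongruenceOn A θ → IsCongruenceOn A φ →
      ∀ x y : A.carrier, (∃ z, θ x z ∧ φ z y) ↔ ∃ z, φ x z ∧ θ z y

/-- Congruence distributivity for all members of a class. -/
def CongDistributiveClass (K : Set (Alg L)) : Prop :=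
  ∀ A : Alg L, A ∈ K → ∀ θ φ ψ : A.carrier → A.carrier → Prop,
    IsCongruenceOn A θ → IsCongruenceOn A φ → IsCongruenceOn A ψ →
      ∀ x y : A.carrier,
        (θ x y ∧ congJoin A φ ψ x y) ↔
          congJoin A (fun a b => θ a b ∧ φ a b) (fun a b => θ a b ∧ ψ a b) x y

/-- The congruence extension property. -/
def HasCEP (K : Set (Alg L)) : Prop :=
  ∀ A B : Alg L, A ∈ K → B ∈ K → ∀ e : A.carrier ↪[L] B.carrier,
    ∀ θ : A.carrier → A.carrier → Prop, IsCongruenceOn A θ →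
      ∃ ρ : B.carrier → B.carrier → Prop, IsCongruenceOn B ρ ∧
        ∀ x y : A.carrier, θ x y ↔ ρ (e x) (e y)

/-- The language consisting of one new function symbol `gᵢ` of arity `ar i` for each `i`. -/
def newLang {ι : Type u} (ar : ι → ℕ) : FirstOrder.Language.{u, u} where
  Functions := fun n => { i : ι // ar i = n }
  Relations := fun _ => PEmpty

/-- The `L`-reduct of an algebra in an expanded language `L.sum N`. -/
def algReduct {N : FirstOrder.Language.{u, u}} (B : Alg (L.sum N)) : Alg L where
  carrier := B.carrier
  str := (LHom.sumInl : L →ᴸ L.sum N).reduct B.carrier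

/-- The class `K[L_F]` of expansions of members of `K` on which each operation in the family
`f` is total, interpreting the new symbol `gᵢ` as `f i`. -/
def expClass (K : Set (Alg L)) {ι : Type u} (ar : ι → ℕ)
    (f : ∀ i, PartialFunOn K (ar i)) : Set (Alg (L.sum (newLang ar))) :=
  { B | ∃ hB : algReduct B ∈ K,
      ∀ (i : ι) (x : Fin (ar i) → B.carrier),
        Structure.funMap (L := L.sum (newLang ar)) (M := B.carrier)
            (Sum.inr ⟨i, rfl⟩ : (L.sum (newLang ar)).Functions (ar i)) x
          ∈ f i (algReduct B) hB x }

/-- Closure under subalgebras (and isomorphic copies) inside a fixed language. -/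
def SClosure {L' : FirstOrder.Language.{u, u}} (S : Set (Alg L')) : Set (Alg L') :=
  { A | ∃ B ∈ S, Nonempty (A.carrier ↪[L'] B.carrier) }

/-- Membership in `ext_pp(K)`: an extendable implicit operation defined by a pp formula. -/
def InExtPP {K : Set (Alg L)} {n : ℕ} (f : PartialFunOn K n) : Prop :=
  IsOperationOn f ∧ (∃ φ : L.Formula (Fin (n + 1)), IsPP φ ∧ DefinedBy f φ) ∧ Extendable f

/-- `M` is the pp expansion of `K` induced by the family `f` of extendable pp-definable
implicit operations, with one new symbol of arity `ar i` for each `i`. -/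
def IsPPExpansionVia (K : Set (Alg L)) {ι : Type u} (ar : ι → ℕ)
    (f : ∀ i, PartialFunOn K (ar i)) (M : Set (Alg (L.sum (newLang ar)))) : Prop :=
  (∀ i, 0 < ar i) ∧ (∀ i, InExtPP (f i)) ∧ M = SClosure (expClass K ar f)

/-- Every implicit operation of `K` is interpolated in `M` by a set of terms of the expanded
language. -/
def InterpolatesByTermsInExp (K : Set (Alg L)) {ι : Type u} {ar : ι → ℕ}
    (M : Set (Alg (L.sum (newLang ar)))) : Prop :=
  ∀ n : ℕ, 0 < n → ∀ g : PartialFunOn K n, IsImplicitOp g →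
    ∃ T : Set ((L.sum (newLang ar)).Term (Fin n)),
      ∀ A : Alg (L.sum (newLang ar)), A ∈ M →
        ∀ (hA : algReduct A ∈ K) (x : Fin n → A.carrier) (b : A.carrier),
          b ∈ g (algReduct A) hA x → ∃ t ∈ T, t.realize x = b

/-- `M` is a Beth companion of `K` (via the given expansion datum). -/
def IsBethCompanionVia (K : Set (Alg L)) {ι : Type u} (ar : ι → ℕ)
    (f : ∀ i, PartialFunOn K (ar i)) (M : Set (Alg (L.sum (newLang ar)))) : Prop :=
  IsPPExpansionVia K ar f M ∧ InterpolatesByTermsInExp K M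

/-- A pp expansion is congruence preserving when the `M`-congruences of each member of `M`
coincide with the `K`-congruences of its `L`-reduct. -/
def CongPreserving {N : FirstOrder.Language.{u, u}} (K : Set (Alg L))
    (M : Set (Alg (L.sum N))) : Prop :=
  ∀ A : Alg (L.sum N), A ∈ M → ∀ θ : A.carrier → A.carrier → Prop,
    IsRelCong M A θ ↔ IsRelCong K (algReduct A) θ

/-- Reinterpretation of an `L₁`-algebra as an `L₂`-algebra along a map sending `L₂`-symbols to
`L₁`-terms (both languages are assumed to be purely functional). -/
def reinterpret {L₁ L₂ : FirstOrder.Language.{u, u}} (ρ : ∀ n, L₂.Functions n → L₁.Term (Fin n))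
    (A : Alg L₁) : Alg L₂ where
  carrier := A.carrier
  str :=
    { funMap := fun {k} s x => (ρ k s).realize x
      RelMap := fun {k} _ _ => False }

/-- Two expansions of the same base language `L` are faithfully term equivalent relative to
`L`. -/
def FaithfullyTermEquivRel (L : FirstOrder.Language.{u, u}) {N₁ N₂ : FirstOrder.Language.{u, u}}
    (M₁ : Set (Alg (L.sum N₁))) (M₂ : Set (Alg (L.sum N₂))) : Prop :=
  ∃ (τ : ∀ n, (L.sum N₁).Functions n → (L.sum N₂).Term (Fin n))
    (ρ : ∀ n, (L.sum N₂).Functions n → (L.sum N₁).Term (Fin n)),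
    (∀ (n : ℕ) (s : L.Functions n),
      τ n (Sum.inl s) = Term.func (Sum.inl s : (L.sum N₂).Functions n) Term.var) ∧
    (∀ (n : ℕ) (s : L.Functions n),
      ρ n (Sum.inl s) = Term.func (Sum.inl s : (L.sum N₁).Functions n) Term.var) ∧
    (∀ A : Alg (L.sum N₁), A ∈ M₁ → reinterpret ρ A ∈ M₂) ∧
    (∀ B : Alg (L.sum N₂), B ∈ M₂ → reinterpret τ B ∈ M₁) ∧
    (∀ A : Alg (L.sum N₁), A ∈ M₁ → reinterpret τ (reinterpret ρ A) = A) ∧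
    (∀ B : Alg (L.sum N₂), B ∈ M₂ → reinterpret ρ (reinterpret τ B) = B)

/-- Codes for instances of operations on `M`: a symbol with its arguments. -/
abbrev OpInst (L : FirstOrder.Language.{u, u}) (M : Type u) : Type u :=
  Σ k : ℕ, L.Functions k × (Fin k → M)

/-- The ultraproduct argument: partial homomorphisms separating `b` glue to homomorphisms. -/
theorem exists_sep_of_local {L : FirstOrder.Language.{u, u}} [L.IsAlgebraic]
    {K : Set (Alg L)} (hU : ClosedUnderUprod K) (B : Alg L) (R : Set B.carrier) (b : B.carrier)
    (H : ∀ (V : Finset B.carrier) (E : Finset (OpInst L B.carrier)),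
      ∃ C : Alg L, C ∈ K ∧ ∃ g h : B.carrier → C.carrier,
        (∀ q ∈ E, g (Structure.funMap q.2.1 q.2.2) = Structure.funMap q.2.1 fun j => g (q.2.2 j)) ∧
        (∀ q ∈ E, h (Structure.funMap q.2.1 q.2.2) = Structure.funMap q.2.1 fun j => h (q.2.2 j)) ∧
        (∀ a ∈ V, a ∈ R → g a = h a) ∧ g b ≠ h b) :
    ∃ C : Alg L, C ∈ K ∧ ∃ g h : B.carrier →[L] C.carrier,
      (∀ a ∈ R, g a = h a) ∧ g b ≠ h b := by
  classical
  choose C hC g h hg hh hR hb using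
    fun i : Finset B.carrier × Finset (OpInst L B.carrier) => H i.1 i.2
  let F : Ultrafilter (Finset B.carrier × Finset (OpInst L B.carrier)) :=
    Ultrafilter.of Filter.atTop
  have hF : (F : Filter (Finset B.carrier × Finset (OpInst L B.carrier))) ≤ Filter.atTop := Ultrafilter.of_le _
  have hV : ∀ a : B.carrier, ∀ᶠ i in (F : Filter (Finset B.carrier × Finset (OpInst L B.carrier))), a ∈ i.1 := fun a =>
    hF (Filter.mem_of_superset (Filter.mem_atTop (({a} : Finset B.carrier), ∅))
      fun i hi => hi.1 (Finset.mem_singleton_self a))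
  have hE : ∀ q : OpInst L B.carrier, ∀ᶠ i in (F : Filter (Finset B.carrier × Finset (OpInst L B.carrier))), q ∈ i.2 := fun q =>
    hF (Filter.mem_of_superset (Filter.mem_atTop (∅, ({q} : Finset (OpInst L B.carrier))))
      fun i hi => hi.2 (Finset.mem_singleton_self q))
  have key : ∀ g' : ∀ i, B.carrier → (C i).carrier,
      (∀ i, ∀ q ∈ i.2, g' i (Structure.funMap q.2.1 q.2.2) =
        Structure.funMap q.2.1 fun j => g' i (q.2.2 j)) →
      ∃ G : B.carrier →[L] (Alg.uprod F C).carrier,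
        ∀ y, G y = (Quotient.mk'' (fun i => g' i y) :
          Filter.Product (F : Filter (Finset B.carrier × Finset (OpInst L B.carrier))) fun i => (C i).carrier) := by
    intro g' hg'
    refine ⟨⟨fun y => (Quotient.mk'' (fun i => g' i y) :
          Filter.Product (F : Filter (Finset B.carrier × Finset (OpInst L B.carrier))) fun i => (C i).carrier), ?_, ?_⟩, fun y => rfl⟩
    · intro n f x
      refine Eq.trans ?_ (Ultraproduct.funMap_cast (u := F) f (fun j i => g' i (x j))).symm
      refine Quotient.sound' ?_
      filter_upwards [hE ⟨n, f, x⟩] with i hi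
      exact hg' i _ hi
    · intro n r
      exact isEmptyElim r
  obtain ⟨G, hG⟩ := key g hg
  obtain ⟨G', hG'⟩ := key h hh
  refine ⟨Alg.uprod F C, hU _ F C hC, G, G', ?_, ?_⟩
  · intro a ha
    rw [hG, hG']
    refine Quotient.sound' ?_
    filter_upwards [hV a] with i hi
    exact hR i a hi ha
  · rw [hG, hG']
    intro he
    have h1 : ∀ᶠ i in (F : Filter (Finset B.carrier × Finset (OpInst L B.carrier))), g i b = h i b := Quotient.exact' he
    obtain ⟨i, hi⟩ := h1.exists
    exact hb i hi

/-- Strong ES follows from local approximations of each algebra by algebras with good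
dominions. -/
theorem strongES_of_approx {L : FirstOrder.Language.{u, u}} [L.IsAlgebraic]
    {K : Set (Alg L)} (hU : ClosedUnderUprod K)
    (H : ∀ B : Alg L, B ∈ K → ∀ (b : B.carrier) (V : Finset B.carrier)
      (E : Finset (OpInst L B.carrier)), b ∈ V →
      ∃ P : Alg L, (∀ A : L.Substructure P.carrier, A.FG →
          dominion K P.carrier (A : Set P.carrier) = (A : Set P.carrier)) ∧
        ∃ (ρ : B.carrier → P.carrier) (π : P.carrier →[L] B.carrier),
          (∀ y ∈ V, π (ρ y) = y) ∧
          ∀ q ∈ E, ρ (Structure.funMap q.2.1 q.2.2) =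
            Structure.funMap q.2.1 fun j => ρ (q.2.2 j)) :
    StrongES K := by
  classical
  intro A B _ hB f b hb
  obtain ⟨C, hC, g, h, h1, h2⟩ := exists_sep_of_local hU B (Set.range f) b (by
    intro V E
    obtain ⟨P, hP, ρ, π, hπ, hρ⟩ := H B hB b (insert b V) E (Finset.mem_insert_self _ _)
    let S : Set P.carrier := ρ '' {y | y ∈ V ∧ y ∈ Set.range f}
    have hS : S.Finite := (V.finite_toSet.subset fun y hy => hy.1).image ρ
    have hd := hP (Substructure.closure L S) (Substructure.fg_closure hS)
    have hbn : ρ b ∉ Substructure.closure L S := by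
      intro hm
      have hle : Substructure.closure L S ≤ f.range.comap π := by
        rw [Substructure.closure_le]
        rintro _ ⟨y, ⟨hyV, hyR⟩, rfl⟩
        change π (ρ y) ∈ f.range
        rw [hπ y (Finset.mem_insert_of_mem hyV)]
        exact Hom.mem_range.2 hyR
      have := hle hm
      rw [Substructure.mem_comap, hπ b (Finset.mem_insert_self _ _)] at this
      exact hb (Hom.mem_range.1 this)
    have hbd : ρ b ∉ dominion K P.carrier (Substructure.closure L S : Set P.carrier) := by
      rw [hd]; exact hbn
    simp only [dominion, Set.mem_ofPred_eq, not_forall] at hbd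
    obtain ⟨C, hC, g, h, hgh, hne⟩ := hbd
    refine ⟨C, hC, fun y => g (ρ y), fun y => h (ρ y), ?_, ?_, ?_, hne⟩
    · intro q hq
      simp only [hρ q hq]
      exact g.map_fun _ _
    · intro q hq
      simp only [hρ q hq]
      exact h.map_fun _ _
    · intro a haV haR
      exact hgh _ (Substructure.subset_closure ⟨a, ⟨haV, haR⟩, rfl⟩))
  exact ⟨C, hC, g, h, fun a => h1 _ ⟨a, rfl⟩, h2⟩

theorem dominion_eq_of_strongES {L : FirstOrder.Language.{u, u}} 
    {K : Set (Alg L)} (hS : ClosedUnderSub K) (h : StrongES K) (B : Alg L) (hB : B ∈ K)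
    (A : L.Substructure B.carrier) :
    dominion K B.carrier (A : Set B.carrier) = (A : Set B.carrier) := by
  apply Set.Subset.antisymm
  · intro b hb
    by_contra hbA
    let A' : Alg L := ⟨A⟩
    obtain ⟨C, hC, g, h', h1, h2⟩ := h A' B (hS A' B hB ⟨A.subtype⟩) hB A.subtype.toHom b (by
      rintro ⟨a, rfl⟩
      exact hbA a.2)
    exact h2 (hb C hC g h' fun a ha => h1 ⟨a, ha⟩)
  · intro b hb C hC g h' hgh
    exact hgh b hb

/-- Terms are evaluated componentwise in a direct product. -/
theorem realize_pi {L : FirstOrder.Language.{u, u}} {ι : Type u} (A : ι → Alg L) {α : Type}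
    (t : L.Term α) (x : α → (Alg.pi A).carrier) (i : ι) :
    t.realize x i = t.realize fun a => x a i := by
  induction t with
  | var => rfl
  | func f ts ih =>
    change Structure.funMap f (fun j => (ts j).realize x i) = _
    simp only [ih]
    rfl

/-- Existence of finitely presented algebras in a quasivariety. -/
theorem exists_finitelyPresented {L : FirstOrder.Language.{u, u}} [L.IsAlgebraic]
    {K : Set (Alg L)} (hS : ClosedUnderSub K) (hP : ClosedUnderProd K) (m : ℕ)
    (Y : Finset (L.Term (Fin m) × L.Term (Fin m))) :
    ∃ B : Alg L, B ∈ K ∧ ∃ b : Fin m → B.carrier,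
      Substructure.closure L (Set.range b) = ⊤ ∧
      (∀ p ∈ Y, p.1.realize b = p.2.realize b) ∧
      ∀ C : Alg L, C ∈ K → ∀ x : Fin m → C.carrier,
        (∀ p ∈ Y, p.1.realize x = p.2.realize x) →
          ∃ g : B.carrier →[L] C.carrier, ∀ i, g (b i) = x i := by
  classical
  let ι : Type u := {q : L.Term (Fin m) × L.Term (Fin m) // ∃ C : Alg L, C ∈ K ∧
    ∃ x : Fin m → C.carrier, (∀ p ∈ Y, p.1.realize x = p.2.realize x) ∧
      q.1.realize x ≠ q.2.realize x}
  choose D hD z hz hne using fun q : ι => q.2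
  let p : Fin m → (Alg.pi D).carrier := fun j i => z i j
  let N : L.Substructure (Alg.pi D).carrier := Substructure.closure L (Set.range p)
  let B : Alg L := ⟨N⟩
  have hB : B ∈ K := hS B (Alg.pi D) (hP ι D hD) ⟨N.subtype⟩
  let b : Fin m → N := fun j => ⟨p j, Substructure.subset_closure ⟨j, rfl⟩⟩
  have hbr : ∀ t : L.Term (Fin m), ((t.realize b : N) : (Alg.pi D).carrier) = t.realize p := by
    intro t
    exact (HomClass.realize_term N.subtype (t := t) (v := b)).symm
  have hex : ∀ y : N, ∃ t : L.Term (Fin m), t.realize b = y := by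
    rintro ⟨y, hy⟩
    have : ∃ t : L.Term (Fin m), t.realize p = y := by
      refine Substructure.closure_induction (L := L)
        (p := fun y => ∃ t : L.Term (Fin m), t.realize p = y) hy ?_ ?_
      · rintro _ ⟨j, rfl⟩
        exact ⟨Term.var j, rfl⟩
      · intro n f x hx
        choose t ht using hx
        refine ⟨Term.func f t, ?_⟩
        simp [Term.realize_func, ht]
    obtain ⟨t, ht⟩ := this
    exact ⟨t, Subtype.ext ((hbr t).trans ht)⟩
  refine ⟨B, hB, b, ?_, ?_, ?_⟩
  · rw [eq_top_iff]
    intro y _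
    obtain ⟨t, rfl⟩ := hex y
    exact Term.realize_mem t _ fun j => Substructure.subset_closure ⟨j, rfl⟩
  · intro q hq
    apply Subtype.ext
    refine (hbr _).trans (Eq.trans ?_ (hbr _).symm)
    funext i
    exact (realize_pi D q.1 p i).trans ((hz i q hq).trans (realize_pi D q.2 p i).symm)
  · intro C hC x hx
    have hwd : ∀ s t : L.Term (Fin m), s.realize b = t.realize b →
        s.realize x = t.realize x := by
      intro s t hst
      by_contra hcon
      let i : ι := ⟨(s, t), C, hC, x, hx, hcon⟩
      apply hne i
      have h1 : s.realize p = t.realize p := by rw [← hbr, ← hbr, hst]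
      exact (realize_pi D s p i).symm.trans ((congrFun h1 i).trans (realize_pi D t p i))
    choose τ hτ using hex
    refine ⟨⟨fun y => (τ y).realize x, ?_, ?_⟩, ?_⟩
    · intro n f v
      change _ = (Term.func f fun j => τ (v j)).realize x
      apply hwd
      rw [hτ, Term.realize_func]
      simp only [hτ]
    · intro n r
      exact isEmptyElim r
    · intro j
      exact hwd (τ (b j)) (Term.var j) (hτ _)

/-- For a universal class `K`: `K` has the strong epimorphism surjectivity
property iff for every pair of finitely generated algebras `A ≤ B` with `B ∈ K` the dominion
`d_K(A,B)` equals `A`; moreover, when `K` is a quasivariety, `B` may additionally be assumed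
to be finitely presented in `K`. -/
theorem statement_9 {L : FirstOrder.Language.{u, u}} [L.IsAlgebraic]
    {K : Set (Alg L)} (hK : IsUniversalClass K) :
    (StrongES K ↔
      ∀ B : Alg L, B ∈ K → Structure.FG L B.carrier →
        ∀ A : L.Substructure B.carrier, A.FG →
          dominion K B.carrier (A : Set B.carrier) = (A : Set B.carrier)) ∧
    (IsQuasivariety K →
      (StrongES K ↔
        ∀ B : Alg L, FinitelyPresentedIn K B →
          ∀ A : L.Substructure B.carrier, A.FG →
            dominion K B.carrier (A : Set B.carrier) = (A : Set B.carrier))) := by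
  classical
  obtain ⟨_, hSub, hU⟩ := hK
  refine ⟨⟨fun h B hB _ A _ => dominion_eq_of_strongES hSub h B hB A, fun h => ?_⟩, fun hQ =>
    ⟨fun h B hB A _ => dominion_eq_of_strongES hSub h B hB.1 A, fun h => ?_⟩⟩
  · refine strongES_of_approx hU fun B hB b V E hbV => ?_
    let W : Set B.carrier := V ∪ ⋃ q ∈ E, Set.range q.2.2
    have hW : W.Finite := V.finite_toSet.union
      (E.finite_toSet.biUnion fun q _ => Set.finite_range _)
    let N : L.Substructure B.carrier := Substructure.closure L W
    have hNFG : N.FG := Substructure.fg_closure hW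
    have hVN : ∀ y ∈ V, y ∈ N := fun y hy => Substructure.subset_closure (Or.inl hy)
    let P : Alg L := ⟨N⟩
    have hP : P ∈ K := hSub P B hB ⟨N.subtype⟩
    let ρ : B.carrier → N := fun y => if hy : y ∈ N then ⟨y, hy⟩ else ⟨b, hVN b hbV⟩
    have hρ : ∀ y ∈ N, ((ρ y : N) : B.carrier) = y := by
      intro y hy
      simp only [ρ, dif_pos hy]
    refine ⟨P, h P hP ((Substructure.fg_iff_structure_fg N).1 hNFG), ρ, N.subtype.toHom,
      fun y hy => hρ y (hVN y hy), ?_⟩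
    intro q hq
    have hx : ∀ j, q.2.2 j ∈ N := fun j => Substructure.subset_closure
      (Or.inr (Set.mem_biUnion hq ⟨j, rfl⟩))
    apply Subtype.ext
    refine (hρ _ (N.fun_mem q.2.1 q.2.2 hx)).trans ?_
    refine Eq.trans ?_ (N.subtype.map_fun q.2.1 fun j => ρ (q.2.2 j)).symm
    congr 1
    funext j
    exact (hρ _ (hx j)).symm
  · refine strongES_of_approx hU fun B hB b V E hbV => ?_
    let W' : Set B.carrier :=
      V ∪ ⋃ q ∈ E, (Set.range q.2.2 ∪ {Structure.funMap q.2.1 q.2.2})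
    have hW' : W'.Finite := V.finite_toSet.union
      (E.finite_toSet.biUnion fun q _ => (Set.finite_range _).union (Set.finite_singleton _))
    let W : Finset B.carrier := hW'.toFinset
    have hVW : ∀ y ∈ V, y ∈ W := fun y hy => hW'.mem_toFinset.2 (Or.inl hy)
    have hxW : ∀ q ∈ E, ∀ j, q.2.2 j ∈ W := fun q hq j => hW'.mem_toFinset.2
      (Or.inr (Set.mem_biUnion hq (Or.inl ⟨j, rfl⟩)))
    have hfW : ∀ q ∈ E, Structure.funMap q.2.1 q.2.2 ∈ W := fun q hq => hW'.mem_toFinset.2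
      (Or.inr (Set.mem_biUnion hq (Or.inr rfl)))
    let e := W.equivFin
    let ν : B.carrier → Fin W.card :=
      fun y => if hy : y ∈ W then e ⟨y, hy⟩ else e ⟨b, hVW b hbV⟩
    let β : Fin W.card → B.carrier := fun j => (e.symm j).1
    have hβν : ∀ y ∈ W, β (ν y) = y := by
      intro y hy
      simp only [β, ν, dif_pos hy, Equiv.symm_apply_apply]
    let Y : Finset (L.Term (Fin W.card) × L.Term (Fin W.card)) :=
      E.image fun q => (Term.func q.2.1 fun j => Term.var (ν (q.2.2 j)),
        Term.var (ν (Structure.funMap q.2.1 q.2.2)))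
    obtain ⟨P, hP, p, hgen, hY, huniv⟩ := exists_finitelyPresented hSub hQ.2.2.1 W.card Y
    obtain ⟨π, hπ⟩ := huniv B hB β (by
      intro r hr
      obtain ⟨q, hq, rfl⟩ := Finset.mem_image.1 hr
      simp only [Term.realize_func, Term.realize_var, hβν _ (hfW q hq), hβν _ (hxW q hq _)])
    refine ⟨P, h P ⟨hP, W.card, Y, p, hgen, hY, huniv⟩, fun y => p (ν y), π, ?_, ?_⟩
    · intro y hy
      rw [hπ, hβν y (hVW y hy)]
    · intro q hq
      exact (hY _ (Finset.mem_image_of_mem _ hq)).symm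

end Impl
end

section
/- Let K be a quasivariety with the amalgamation property. Then K has the strong epimorphism surjectivity property if and only if K has the weak epimorphism surjectivity property. -/
namespace Impl

open FirstOrder Language

universe u v

variable {L : FirstOrder.Language.{u, u}}

section Aux

/-- An injective map preserving the operations is an embedding in an algebraic language. -/
def mkEmb [L.IsAlgebraic] {M N : Type u} [L.Structure M] [L.Structure N] (g : M → N)
    (hg : Function.Injective g)
    (hf : ∀ (n : ℕ) (f : L.Functions n) (x : Fin n → M),
      g (Structure.funMap f x) = Structure.funMap f (g ∘ x)) : M ↪[L] N where
  toFun := g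
  inj' := hg
  map_fun' := fun {n} f x => hf n f x
  map_rel' := fun {_} r _ => isEmptyElim r

/-- A map preserving the operations is a homomorphism in an algebraic language. -/
def mkHom [L.IsAlgebraic] {M N : Type u} [L.Structure M] [L.Structure N] (g : M → N)
    (hf : ∀ (n : ℕ) (f : L.Functions n) (x : Fin n → M),
      g (Structure.funMap f x) = Structure.funMap f (g ∘ x)) : M →[L] N where
  toFun := g
  map_fun' := fun {n} f x => hf n f x
  map_rel' := fun {_} r _ => isEmptyElim r

/-- The family with two members `A` and `B`. -/
def pairFam (A B : Alg L) : ULift.{u} Bool → Alg L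
  | ⟨true⟩ => A
  | ⟨false⟩ => B

/-- The pairing map into the product of two algebras. -/
def pairFun (A B : Alg L) (a : A.carrier) (b : B.carrier) : (Alg.pi (pairFam A B)).carrier
  | ⟨true⟩ => a
  | ⟨false⟩ => b

theorem prod_mem [L.IsAlgebraic] {K : Set (Alg L)} (hK : IsQuasivariety K) {A B : Alg L}
    (hA : A ∈ K) (hB : B ∈ K) : Alg.prod A B ∈ K := by
  refine hK.2.1 _ (Alg.pi (pairFam A B)) (hK.2.2.1 _ _ ?_) ⟨?_⟩
  · rintro ⟨_ | _⟩
    · exact hB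
    · exact hA
  · refine mkEmb (fun p => pairFun A B p.1 p.2) ?_ ?_
    · intro p q h
      exact Prod.ext (congrFun h ⟨true⟩) (congrFun h ⟨false⟩)
    · intro n f x
      funext i
      obtain ⟨_ | _⟩ := i <;> rfl

/-- The embedding `x ↦ (x, g x)`. -/
def graphEmb [L.IsAlgebraic] (A B : Alg L) (g : A.carrier →[L] B.carrier) :
    A.carrier ↪[L] (Alg.prod A B).carrier :=
  mkEmb (fun x => ((x, g x) : A.carrier × B.carrier)) (fun _ _ h => congrArg Prod.fst h)
    (fun _ f x => Prod.ext rfl (g.map_fun f x))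

theorem extend_pair [L.IsAlgebraic] {K : Set (Alg L)} (hK : IsQuasivariety K)
    (hAP : HasAmalgamation K) {A B C : Alg L} (hA : A ∈ K) (hB : B ∈ K) (hC : C ∈ K)
    (e : A.carrier ↪[L] B.carrier) (g h : A.carrier →[L] C.carrier) :
    ∃ D : Alg L, D ∈ K ∧ ∃ g' h' : B.carrier →[L] D.carrier,
      ∀ x, g' (e x) = h' (e x) ↔ g x = h x := by
  have hP := prod_mem hK hA hC
  obtain ⟨D, hD, e1, k, h1⟩ := hAP A B _ hA hB hP e (graphEmb A C g)
  obtain ⟨E, hE, m, n, h2⟩ := hAP A B D hA hB hD e (k.comp (graphEmb A C h))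
  refine ⟨E, hE, (n.comp e1).toHom, m.toHom, fun x => ?_⟩
  have hl : (n.comp e1).toHom (e x) = n (k (graphEmb A C g x)) := by
    rw [← h1]; rfl
  have hr : m.toHom (e x) = n (k (graphEmb A C h x)) := h2 x
  rw [hl, hr, n.injective.eq_iff, k.injective.eq_iff]
  exact ⟨fun h => congrArg Prod.snd h, fun h => Prod.ext rfl h⟩

theorem local_sep [L.IsAlgebraic] {K : Set (Alg L)} (hK : IsQuasivariety K)
    (hAP : HasAmalgamation K) (hW : WeakES K) {B : Alg L} (hB : B ∈ K) (X : Set B.carrier)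
    (hX : X.Finite) (b : B.carrier) (hb : b ∉ Substructure.closure L X) :
    ∃ D : Alg L, D ∈ K ∧ ∃ g h : B.carrier →[L] D.carrier,
      (∀ x ∈ X, g x = h x) ∧ g b ≠ h b := by
  let S := Substructure.closure L X
  let T := Substructure.closure L (insert b X)
  have hST : S ≤ T := Substructure.closure_mono (Set.subset_insert b X)
  have hbT : b ∈ T := Substructure.subset_closure (Set.mem_insert b X)
  have hSK : (⟨S⟩ : Alg L) ∈ K := hK.2.1 _ B hB ⟨S.subtype⟩
  have hTK : (⟨T⟩ : Alg L) ∈ K := hK.2.1 _ B hB ⟨T.subtype⟩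
  have hSF : Structure.FG L S := (Substructure.fg_iff_structure_fg S).1 (Substructure.fg_closure hX)
  have hTF : Structure.FG L T :=
    (Substructure.fg_iff_structure_fg T).1 (Substructure.fg_closure (hX.insert b))
  by_contra hcon
  have hsurj := hW ⟨S⟩ ⟨T⟩ hSK hTK hSF hTF (Substructure.inclusion hST).toHom (by
    intro C hC g h hgh
    by_contra hne
    have hgb : g ⟨b, hbT⟩ ≠ h ⟨b, hbT⟩ := by
      intro hgb
      apply hne
      have key : ∀ y (hy : y ∈ T), g ⟨y, hy⟩ = h ⟨y, hy⟩ := by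
        have hle : T ≤ (g.eqLocus h).map T.subtype.toHom := by
          refine Substructure.closure_le.2 ?_
          rintro y (rfl | hy)
          · exact ⟨⟨y, hbT⟩, hgb, rfl⟩
          · have hyS : y ∈ S := Substructure.subset_closure hy
            exact ⟨⟨y, hST hyS⟩, hgh ⟨y, hyS⟩, rfl⟩
        intro y hy
        obtain ⟨z, hz, rfl⟩ := hle hy
        exact hz
      ext ⟨y, hy⟩
      exact key y hy
    obtain ⟨D, hD, g', h', hd⟩ := extend_pair hK hAP hTK hB hC T.subtype g h
    refine hcon ⟨D, hD, g', h', fun x hx => ?_, fun hh => hgb ((hd ⟨b, hbT⟩).1 hh)⟩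
    have hxS : x ∈ S := Substructure.subset_closure hx
    exact (hd ⟨x, hST hxS⟩).2 (hgh ⟨x, hxS⟩))
  obtain ⟨a, ha⟩ := hsurj ⟨b, hbT⟩
  have : (a : B.carrier) = b := congrArg Subtype.val ha
  exact hb (this ▸ a.2)

theorem strong_of_weak [L.IsAlgebraic] {K : Set (Alg L)} (hK : IsQuasivariety K)
    (hAP : HasAmalgamation K) (hW : WeakES K) : StrongES K := by
  intro A B hA hB f b hb
  have step : ∀ X : Finset A.carrier, ∃ D : Alg L, D ∈ K ∧ ∃ g h : B.carrier →[L] D.carrier,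
      (∀ x ∈ X, g (f x) = h (f x)) ∧ g b ≠ h b := by
    intro X
    obtain ⟨D, hD, g, h, hgh, hne⟩ := local_sep hK hAP hW hB (f '' (X : Set A.carrier))
      (X.finite_toSet.image f) b (by
        intro hm
        apply hb
        have hle : Substructure.closure L (f '' (X : Set A.carrier)) ≤ f.range := by
          rw [Substructure.closure_le]
          rintro _ ⟨x, _, rfl⟩
          exact Hom.mem_range.2 ⟨x, rfl⟩
        obtain ⟨a, ha⟩ := Hom.mem_range.1 (hle hm)
        exact ⟨a, ha⟩)
    exact ⟨D, hD, g, h, fun x hx => hgh _ ⟨x, hx, rfl⟩, hne⟩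
  choose D hD g h hgh hne using step
  let U : Ultrafilter (Finset A.carrier) := Ultrafilter.of Filter.atTop
  have hU : ∀ a : A.carrier, ∀ᶠ X in (U : Filter (Finset A.carrier)), a ∈ X := by
    intro a
    refine (Ultrafilter.of_le Filter.atTop) ?_
    filter_upwards [Filter.eventually_ge_atTop ({a} : Finset A.carrier)] with X hX
    exact hX (Finset.mem_singleton_self a)
  let q : ∀ g : (∀ X, B.carrier →[L] (D X).carrier), B.carrier →[L] (Alg.uprod U D).carrier :=
    fun g => mkHom (fun y => Quotient.mk _ fun X => g X y) (by
      intro n k x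
      refine Eq.trans ?_ (Ultraproduct.funMap_cast (M := fun X => (D X).carrier) (u := U) k
        (fun i X => g X (x i))).symm
      exact congrArg (Quotient.mk _) (funext fun X => (g X).map_fun k x))
  refine ⟨Alg.uprod U D, hK.2.2.2 _ U D hD, q g, q h, fun a => ?_, fun hq => ?_⟩
  · refine Quotient.sound ?_
    exact (hU a).mono fun X hX => hgh X a hX
  · have h1 : ∀ᶠ X in (U : Filter (Finset A.carrier)), g X b = h X b := Quotient.exact hq
    obtain ⟨X, hX⟩ := h1.exists
    exact hne X hX

end Aux

/-- Let `K` be a quasivariety with the amalgamation property. Then `K` has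
the strong epimorphism surjectivity property if and only if it has the weak epimorphism
surjectivity property. -/
theorem statement_11 {L : FirstOrder.Language.{u, u}} [L.IsAlgebraic]
    {K : Set (Alg L)} (hK : IsQuasivariety K) (hAP : HasAmalgamation K) :
    StrongES K ↔ WeakES K := by
  refine ⟨fun hS A B hA hB _ _ f hf b => ?_, strong_of_weak hK hAP⟩
  by_contra hb
  obtain ⟨C, hC, g, h, hgh, hne⟩ := hS A B hA hB f b hb
  exact hne (by rw [hf C hC g h hgh])

end Impl
end

section
/- All the Beth companions of a quasivariety K are faithfully term equivalent relative to K. -/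
namespace Impl

open FirstOrder Language

universe u v

variable {L : FirstOrder.Language.{u, u}}

section Helpers

open Filter

theorem snoc_comp {α : Type*} {β : Type*} (g : α → β) {n : ℕ} (x : Fin n → α) (b : α) :
    (fun k => g ((Fin.snoc x b : Fin (n + 1) → α) k)) =
      (Fin.snoc (fun j => g (x j)) (g b) : Fin (n + 1) → β) := by
  funext k
  refine Fin.lastCases ?_ (fun j => ?_) k <;> simp

/-- Eventually-embeddings into the factors induce an embedding into the ultraproduct. -/
theorem exists_emb_uprod [L.IsAlgebraic] {I : Type u} (F : Ultrafilter I) (A : Alg L)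
    (B : I → Alg L) (g : ∀ i, A.carrier → (B i).carrier)
    (hg : ∀ᶠ i in (F : Filter I), ∃ e : A.carrier ↪[L] (B i).carrier, ∀ a, e a = g i a) :
    ∃ e : A.carrier ↪[L] (Alg.uprod F B).carrier,
      ∀ a, e a = (Quotient.mk _ (fun i => g i a) :
        Filter.Product (F : Filter I) fun i => (B i).carrier) := by
  let h : A.carrier →[L] (Alg.uprod F B).carrier :=
    { toFun := fun a => (Quotient.mk _ (fun i => g i a) :
        Filter.Product (F : Filter I) fun i => (B i).carrier)
      map_fun' := by
        intro n s x
        have := Ultraproduct.funMap_cast (u := F) (M := fun i => (B i).carrier) s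
          (fun j i => g i (x j))
        refine Eq.trans ?_ this.symm
        apply Quotient.sound
        filter_upwards [hg] with i hi
        obtain ⟨e, he⟩ := hi
        rw [← he, e.map_fun]
        congr 1
        funext j
        exact he _
      map_rel' := fun r => isEmptyElim r }
  have hinj : Function.Injective h := by
    intro a b hab
    have : ∀ᶠ i in (F : Filter I), g i a = g i b := Quotient.exact hab
    obtain ⟨i, hi, e, he⟩ := (this.and hg).exists
    rw [← he, ← he] at hi
    exact e.injective hi
  exact ⟨Embedding.ofInjective hinj, fun a => rfl⟩

theorem dom_of_emb {K : Set (Alg L)} {n : ℕ} {f : PartialFunOn K n} (hf : IsOperationOn f)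
    {A B : Alg L} (hA : A ∈ K) (hB : B ∈ K) (e : A.carrier ↪[L] B.carrier)
    (x : Fin n → A.carrier) (h : (f A hA x).Dom) : (f B hB fun i => e (x i)).Dom := by
  have := hf A B hA hB e.toHom x _ (Part.get_mem h)
  exact Part.dom_iff_mem.2 ⟨_, this⟩

/-- One step: finitely many pairs. -/
theorem ext_finset {K : Set (Alg L)} {ι : Type u} (ar : ι → ℕ)
    (f : ∀ i, PartialFunOn K (ar i)) (hf : ∀ i, InExtPP (f i)) (A : Alg L) (hA : A ∈ K)
    (s : Finset (Σ i, Fin (ar i) → A.carrier)) :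
    ∃ (B : Alg L) (hB : B ∈ K) (e : A.carrier ↪[L] B.carrier),
      ∀ p ∈ s, (f p.1 B hB fun j => e (p.2 j)).Dom := by
  classical
  induction s using Finset.induction_on with
  | empty => exact ⟨A, hA, Embedding.refl L _, by simp⟩
  | insert p s _ ih =>
    obtain ⟨B, hB, e, h⟩ := ih
    obtain ⟨C, hC, e', h'⟩ := (hf p.1).2.2 B hB (fun j => e (p.2 j))
    refine ⟨C, hC, e'.comp e, ?_⟩
    intro q hq
    rcases Finset.mem_insert.1 hq with rfl | hq
    · exact h'
    · exact dom_of_emb (hf q.1).1 hB hC e' _ (h q hq)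

/-- One step: all tuples of `A` at once. -/
theorem ext_all [L.IsAlgebraic] {K : Set (Alg L)} (hK : IsQuasivariety K) {ι : Type u}
    (ar : ι → ℕ)
    (f : ∀ i, PartialFunOn K (ar i)) (hf : ∀ i, InExtPP (f i)) (A : Alg L) (hA : A ∈ K)
    (hne : Nonempty A.carrier) :
    ∃ (B : Alg L) (hB : B ∈ K) (e : A.carrier ↪[L] B.carrier),
      ∀ i (x : Fin (ar i) → A.carrier), (f i B hB fun j => e (x j)).Dom := by
  classical
  choose B hB e h using ext_finset ar f hf A hA
  let F : Ultrafilter (Finset (Σ i, Fin (ar i) → A.carrier)) := Ultrafilter.of atTop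
  obtain ⟨E, hE⟩ := exists_emb_uprod F A B (fun s a => e s a)
    (Eventually.of_forall fun s => ⟨e s, fun a => rfl⟩)
  have hU := hK.2.2.2 _ F B hB
  refine ⟨_, hU, E, ?_⟩
  intro i x
  obtain ⟨φ, -, hφ⟩ := (hf i).2.1
  have : ∀ s, Nonempty (B s).carrier := fun s => hne.map (e s)
  let b : ∀ s, (B s).carrier := fun s =>
    if hd : (f i (B s) (hB s) fun j => e s (x j)).Dom then Part.get _ hd
    else Classical.arbitrary _
  have key : φ.Realize (M := Filter.Product (F : Filter _) fun s => (B s).carrier)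
      (fun k => (Quotient.mk _ ((Fin.snoc (fun j s => e s (x j)) b :
        Fin (ar i + 1) → ∀ s, (B s).carrier) k) :
        Filter.Product (F : Filter _) fun s => (B s).carrier)) := by
    refine (Ultraproduct.realize_formula_cast (u := F) (M := fun s => (B s).carrier) φ
      (Fin.snoc (fun j s => e s (x j)) b)).2 ?_
    have hev : ∀ᶠ s in (F : Filter (Finset (Σ i, Fin (ar i) → A.carrier))), {⟨i, x⟩} ≤ s :=
      Ultrafilter.of_le _ ((eventually_ge_atTop {⟨i, x⟩}).mono fun s hs => hs)
    filter_upwards [hev] with s hs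
    have hd := h s ⟨i, x⟩ (by simpa using hs)
    have hb : b s ∈ f i (B s) (hB s) fun j => e s (x j) := by
      simp only [b]
      rw [dif_pos hd]
      exact Part.get_mem hd
    have := (hφ _ _ _ _).1 hb
    convert this using 1
    funext k
    refine Fin.lastCases ?_ (fun j => ?_) k <;> simp
  refine Part.dom_iff_mem.2 ⟨(Quotient.mk _ b :
        Filter.Product (F : Filter _) fun s => (B s).carrier), ?_⟩
  refine (hφ _ _ _ _).2 ?_
  have hv : (Fin.snoc (fun j => E (x j)) (Quotient.mk _ b :
        Filter.Product (F : Filter _) fun s => (B s).carrier) :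
        Fin (ar i + 1) → Filter.Product (F : Filter _) fun s => (B s).carrier) =
      (fun k => (Quotient.mk _ ((Fin.snoc (fun j s => e s (x j)) b :
        Fin (ar i + 1) → ∀ s, (B s).carrier) k) :
        Filter.Product (F : Filter _) fun s => (B s).carrier)) := by
    refine Eq.trans ?_ (snoc_comp (Quotient.mk _) _ _).symm
    congr 1
    funext j
    exact hE _
  exact hv ▸ key

/-- Every member of `K` embeds in one where all operations are total. -/
theorem ext_total [L.IsAlgebraic] {K : Set (Alg L)} (hK : IsQuasivariety K) {ι : Type u}
    (ar : ι → ℕ) (har : ∀ i, 0 < ar i)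
    (f : ∀ i, PartialFunOn K (ar i)) (hf : ∀ i, InExtPP (f i)) (A : Alg L) (hA : A ∈ K) :
    ∃ (B : Alg L) (hB : B ∈ K) (_ : A.carrier ↪[L] B.carrier),
      ∀ i x, (f i B hB x).Dom := by
  classical
  rcases isEmpty_or_nonempty A.carrier with hem | hne
  · exact ⟨A, hA, Embedding.refl L _, fun i x => (hem.false (x ⟨0, har i⟩)).elim⟩
  let P := { B : Alg L // B ∈ K ∧ Nonempty B.carrier }
  have step : ∀ B : P, ∃ (C : P) (e : B.1.carrier ↪[L] C.1.carrier),
      ∀ i (x : Fin (ar i) → B.1.carrier), (f i C.1 C.2.1 fun j => e (x j)).Dom := by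
    intro B
    obtain ⟨C, hC, e, h⟩ := ext_all hK ar f hf B.1 B.2.1 B.2.2
    exact ⟨⟨C, hC, B.2.2.map e⟩, e, h⟩
  choose nxt em hem using step
  let G : ℕ → P := fun n => Nat.rec ⟨A, hA, hne⟩ (fun _ B => nxt B) n
  let e1 : ∀ n, (G n).1.carrier ↪[L] (G (n + 1)).1.carrier := fun n => em (G n)
  let e : ∀ m n, m ≤ n → ((G m).1.carrier ↪[L] (G n).1.carrier) :=
    DirectedSystem.natLERec (G' := fun n => (G n).1.carrier) e1
  have ds : DirectedSystem (fun n => (G n).1.carrier) (fun i j h => e i j h) :=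
    DirectedSystem.natLERec.directedSystem (G' := fun n => (G n).1.carrier) e1
  let C : Alg L := ⟨Language.DirectLimit (fun n => (G n).1.carrier) e⟩
  have hne' : ∀ n, Nonempty (G n).1.carrier := fun n => (G n).2.2
  let F : Ultrafilter (ULift.{u} ℕ) := Ultrafilter.of atTop
  have hev : ∀ n : ℕ, ∀ᶠ m in (F : Filter (ULift.{u} ℕ)), n ≤ m.down := fun n =>
    Ultrafilter.of_le _ ((eventually_ge_atTop (ULift.up n)).mono fun m hm => hm)
  have hg : ∀ n : ℕ, ∃ E : (G n).1.carrier ↪[L] (Alg.uprod F fun m => (G m.down).1).carrier,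
      ∀ a, E a = (Quotient.mk _ (fun m : ULift.{u} ℕ => if h : n ≤ m.down then e n m.down h a
          else Classical.arbitrary _) :
        Filter.Product (F : Filter _) fun m => (G m.down).1.carrier) := by
    intro n
    apply exists_emb_uprod F (G n).1 (fun m => (G m.down).1)
      (fun m a => if h : n ≤ m.down then e n m.down h a else Classical.arbitrary _)
    filter_upwards [hev n] with m hm
    exact ⟨e n m.down hm, fun a => by rw [dif_pos hm]⟩
  choose E hE using hg
  have hC : C ∈ K := by
    refine hK.2.1 _ _ (hK.2.2.2 _ F (fun m => (G m.down).1) fun m => (G m.down).2.1) ⟨?_⟩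
    refine Language.DirectLimit.lift L ℕ (fun n => (G n).1.carrier) e E ?_
    intro i j hij x
    rw [hE, hE]
    apply Quotient.sound
    filter_upwards [hev j] with m hm
    rw [dif_pos hm, dif_pos (hij.trans hm)]
    exact ds.map_map _ _ _
  let o : ∀ n, (G n).1.carrier ↪[L] C.carrier :=
    fun n => Language.DirectLimit.of L ℕ (fun n => (G n).1.carrier) e n
  refine ⟨C, hC, o 0, ?_⟩
  intro i x
  obtain ⟨n, y, hy⟩ := Language.DirectLimit.exists_quotient_mk'_sigma_mk'_eq (fun n => (G n).1.carrier) e x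
  have h1 := hem (G n) i y
  have h2 := dom_of_emb (hf i).1 (G (n + 1)).2.1 hC (o (n + 1)) _ h1
  convert h2 using 2
  funext j
  have : x j = o n (y j) := by rw [hy]; rfl
  rw [this]
  have h3 : em (G n) (y j) = e n (n + 1) (Nat.le_succ n) (y j) := by
    simp only [e, DirectedSystem.coe_natLERec]
    rw [Nat.leRecOn_succ le_rfl, Nat.leRecOn_self]
  rw [h3]
  exact Language.DirectLimit.of_f.symm




theorem term_realize_pi {I : Type u} (B : I → Alg L) {α : Type v} (t : L.Term α)
    (x : α → (Alg.pi B).carrier) (i : I) :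
    (t.realize x : (Alg.pi B).carrier) i = t.realize (fun a => x a i) := by
  induction t with
  | var => rfl
  | func s ts ih =>
    change Structure.funMap s (fun j => ((ts j).realize x : (Alg.pi B).carrier) i) = _
    simp only [ih]
    rfl

theorem conjEq_pi {I : Type u} (B : I → Alg L) {α : Type v} {k : ℕ} {φ : L.BoundedFormula α k}
    (hφ : IsConjEq φ) (x : α → (Alg.pi B).carrier) (y : Fin k → (Alg.pi B).carrier)
    (h : ∀ i, φ.Realize (fun a => x a i) (fun a => y a i)) : φ.Realize x y := by
  induction hφ with
  | top => exact BoundedFormula.realize_top.2 trivial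
  | equal t₁ t₂ =>
    change t₁.realize _ = t₂.realize _
    funext i
    erw [term_realize_pi B, term_realize_pi B]
    have h2 : (fun a => (Sum.elim x y a : (Alg.pi B).carrier) i) =
        Sum.elim (fun a => x a i) (fun a => y a i) := by
      funext a
      cases a <;> rfl
    rw [h2]
    exact h i
  | inf _ _ ih1 ih2 =>
    simp only [BoundedFormula.realize_inf] at h ⊢
    exact ⟨ih1 fun i => (h i).1, ih2 fun i => (h i).2⟩

theorem pp_pi {I : Type u} (B : I → Alg L) {α : Type v} {k : ℕ} {φ : L.BoundedFormula α k}
    (hφ : IsPP φ) (x : α → (Alg.pi B).carrier) (y : Fin k → (Alg.pi B).carrier)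
    (h : ∀ i, φ.Realize (fun a => x a i) (fun a => y a i)) : φ.Realize x y := by
  induction hφ with
  | of_conjEq hc => exact conjEq_pi B hc x y h
  | ex _ ih =>
    simp only [BoundedFormula.realize_ex] at h ⊢
    choose b hb using h
    refine ⟨b, ih _ fun i => ?_⟩
    have hv : (fun a => (Fin.snoc y b : Fin _ → (Alg.pi B).carrier) a i) =
        Fin.snoc (fun a => y a i) (b i) := by
      exact snoc_comp (fun c : (Alg.pi B).carrier => c i) y b
    exact hv ▸ hb i

/-- Graphs of pp-definable operations are closed under products. -/
theorem mem_pi {K : Set (Alg L)} {n : ℕ} {f : PartialFunOn K n}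
    (hf : ∃ φ : L.Formula (Fin (n + 1)), IsPP φ ∧ DefinedBy f φ)
    {I : Type u} (B : I → Alg L) (hB : ∀ i, B i ∈ K) (hP : Alg.pi B ∈ K)
    (x : Fin n → (Alg.pi B).carrier) (b : (Alg.pi B).carrier)
    (h : ∀ i, b i ∈ f (B i) (hB i) (fun j => x j i)) : b ∈ f (Alg.pi B) hP x := by
  obtain ⟨φ, hpp, hd⟩ := hf
  refine (hd _ _ _ _).2 ?_
  refine pp_pi B hpp _ _ fun i => ?_
  have := (hd _ _ _ _).1 (h i)
  unfold Formula.Realize at this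
  have hv : (fun a => (Fin.snoc x b : Fin _ → (Alg.pi B).carrier) a i) =
      Fin.snoc (fun a => x a i) (b i) := by
    funext k
    refine Fin.lastCases ?_ (fun j => ?_) k
    · rw [Fin.snoc_last, Fin.snoc_last]
    · rw [Fin.snoc_castSucc, Fin.snoc_castSucc]
  rw [hv]
  convert this using 1

theorem expClass_pi {K : Set (Alg L)} (hK : IsQuasivariety K) {ι : Type u} (ar : ι → ℕ)
    (f : ∀ i, PartialFunOn K (ar i)) (hf : ∀ i, InExtPP (f i))
    {I : Type u} (B : I → Alg (L.sum (newLang ar))) (hB : ∀ i, B i ∈ expClass K ar f) :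
    Alg.pi B ∈ expClass K ar f := by
  choose hB' h using hB
  have hP : Alg.pi (fun i => algReduct (B i)) ∈ K := hK.2.2.1 _ _ hB'
  refine ⟨hP, fun i x => ?_⟩
  exact mem_pi (hf i).2.1 (fun i => algReduct (B i)) hB' hP x _ fun k => h k i _

theorem single_term {K : Set (Alg L)} (hK : IsQuasivariety K) {ι : Type u} {ar : ι → ℕ}
    {f : ∀ i, PartialFunOn K (ar i)} {M : Set (Alg (L.sum (newLang ar)))}
    (h : IsBethCompanionVia K ar f M) {n : ℕ} (hn : 0 < n) (g : PartialFunOn K n)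
    (hg : InExtPP g) :
    ∃ t : (L.sum (newLang ar)).Term (Fin n), ∀ B ∈ expClass K ar f, ∀ (hB : algReduct B ∈ K)
      (x : Fin n → B.carrier) (b : B.carrier), b ∈ g (algReduct B) hB x → t.realize x = b := by
  obtain ⟨⟨-, hf, rfl⟩, hint⟩ := h
  obtain ⟨φ, hpp, hd⟩ := hg.2.1
  obtain ⟨T, hT⟩ := hint n hn g ⟨⟨φ, hd⟩, hg.1⟩
  by_contra! hcon
  choose B hB hB' x b hb hne using hcon
  let B' : T → Alg (L.sum (newLang ar)) := fun t => B t.1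
  have hP := expClass_pi hK ar f hf B' fun t => hB t.1
  have hP' : algReduct (Alg.pi B') ∈ K := hP.1
  obtain ⟨t, ht, hte⟩ := hT (Alg.pi B') ⟨_, hP, ⟨Embedding.refl _ _⟩⟩ hP' (fun j t => x t.1 j)
    (fun t => b t.1)
    (mem_pi hg.2.1 (fun t => algReduct (B' t)) (fun t => hB' t.1) hP' _ _ fun t => hb t.1)
  apply hne t
  have := congrFun hte ⟨t, ht⟩
  rw [← this]
  exact (term_realize_pi B' t (fun j t => x t.1 j) ⟨t, ht⟩).symm

instance newLang_isAlgebraic {ι : Type u} (ar : ι → ℕ) : (newLang ar).IsAlgebraic :=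
  fun _ => inferInstanceAs (IsEmpty PEmpty)

/-- The expansion of an algebra by the (total) operations. -/
noncomputable def expandAlg {K : Set (Alg L)} {ι : Type u} (ar : ι → ℕ)
    (f : ∀ i, PartialFunOn K (ar i)) (C : Alg L) (hC : C ∈ K)
    (tot : ∀ i x, (f i C hC x).Dom) : Alg (L.sum (newLang ar)) where
  carrier := C.carrier
  str :=
    { funMap := fun {k} s x => match s with
        | Sum.inl s => Structure.funMap (L := L) s x
        | Sum.inr s => (f s.1 C hC fun j => x (Fin.cast s.2 j)).get (tot _ _)
      RelMap := fun {k} r x => match r with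
        | Sum.inl r => Structure.RelMap (L := L) r x
        | Sum.inr r => nomatch r }

theorem expandAlg_mem {K : Set (Alg L)} {ι : Type u} (ar : ι → ℕ)
    (f : ∀ i, PartialFunOn K (ar i)) (C : Alg L) (hC : C ∈ K)
    (tot : ∀ i x, (f i C hC x).Dom) : expandAlg ar f C hC tot ∈ expClass K ar f :=
  ⟨hC, fun i x => Part.get_mem (tot i x)⟩

theorem alg_ext_fun {L' : FirstOrder.Language.{u, u}} [L'.IsAlgebraic] {M : Type u}
    (s₁ s₂ : L'.Structure M)
    (h : ∀ (n : ℕ) (s : L'.Functions n) (x : Fin n → M), s₁.funMap s x = s₂.funMap s x) :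
    (@Alg.mk L' M s₁) = @Alg.mk L' M s₂ := by
  have : s₁ = s₂ := by
    ext n s x
    · exact h n s x
    · exact isEmptyElim s
  rw [this]

/-- The translation of symbols induced by a family of terms. -/
def transl {N : FirstOrder.Language.{u, u}} {ι : Type u} {ar : ι → ℕ}
    (t : ∀ i, (L.sum N).Term (Fin (ar i))) (n : ℕ) :
    (L.sum (newLang ar)).Functions n → (L.sum N).Term (Fin n)
  | Sum.inl s => Term.func (Sum.inl s : (L.sum N).Functions n) Term.var
  | Sum.inr s => (t s.1).relabel (Fin.cast s.2)

theorem reinterpret_emb {L₁ L₂ : FirstOrder.Language.{u, u}} [L₂.IsAlgebraic]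
    (ρ : ∀ n, L₂.Functions n → L₁.Term (Fin n)) {A B : Alg L₁}
    (e : A.carrier ↪[L₁] B.carrier) :
    ∃ e' : (reinterpret ρ A).carrier ↪[L₂] (reinterpret ρ B).carrier, ∀ a, e' a = e a := by
  let h : (reinterpret ρ A).carrier →[L₂] (reinterpret ρ B).carrier :=
    { toFun := fun a => e a
      map_fun' := fun s x => (HomClass.realize_term (M := A.carrier) (N := B.carrier) e (t := ρ _ s) (v := x)).symm
      map_rel' := fun r => isEmptyElim r }
  exact ⟨Embedding.ofInjective (f := h) e.injective, fun a => rfl⟩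

theorem reinterpret_expand [L.IsAlgebraic] {K : Set (Alg L)} {ι₁ ι₂ : Type u}
    (ar₁ : ι₁ → ℕ) (ar₂ : ι₂ → ℕ)
    (f₁ : ∀ i, PartialFunOn K (ar₁ i)) (f₂ : ∀ i, PartialFunOn K (ar₂ i))
    (t : ∀ i, (L.sum (newLang ar₁)).Term (Fin (ar₂ i)))
    (ht : ∀ i, ∀ B ∈ expClass K ar₁ f₁, ∀ (hB : algReduct B ∈ K)
      (x : Fin (ar₂ i) → B.carrier) (b : B.carrier),
      b ∈ f₂ i (algReduct B) hB x → (t i).realize x = b)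
    (C : Alg L) (hC : C ∈ K) (tot₁ : ∀ i x, (f₁ i C hC x).Dom)
    (tot₂ : ∀ i x, (f₂ i C hC x).Dom) :
    reinterpret (transl t) (expandAlg ar₁ f₁ C hC tot₁) = expandAlg ar₂ f₂ C hC tot₂ := by
  refine alg_ext_fun _ _ ?_
  rintro n (s | ⟨i, rfl⟩) x
  · rfl
  · change ((t i).relabel (Fin.cast rfl)).realize x = _
    rw [Term.realize_relabel]
    exact ht i (expandAlg ar₁ f₁ C hC tot₁) (expandAlg_mem ar₁ f₁ C hC tot₁) hC x _
      (Part.get_mem (tot₂ i x))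

/-- Members of a pp expansion embed in algebras where two families are total. -/
theorem emb_expand [L.IsAlgebraic] {K : Set (Alg L)} (hK : IsQuasivariety K) {ι₁ ι₂ : Type u}
    (ar₁ : ι₁ → ℕ) (ar₂ : ι₂ → ℕ)
    (f₁ : ∀ i, PartialFunOn K (ar₁ i)) (f₂ : ∀ i, PartialFunOn K (ar₂ i))
    (ha₁ : ∀ i, 0 < ar₁ i) (ha₂ : ∀ i, 0 < ar₂ i)
    (hf₁ : ∀ i, InExtPP (f₁ i)) (hf₂ : ∀ i, InExtPP (f₂ i))
    (A : Alg (L.sum (newLang ar₁))) (hA : A ∈ SClosure (expClass K ar₁ f₁)) :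
    ∃ (C : Alg L) (hC : C ∈ K) (tot₁ : ∀ i x, (f₁ i C hC x).Dom)
      (_ : ∀ i x, (f₂ i C hC x).Dom),
      Nonempty (A.carrier ↪[L.sum (newLang ar₁)] (expandAlg ar₁ f₁ C hC tot₁).carrier) := by
  obtain ⟨B, ⟨hB, hBf⟩, ⟨e⟩⟩ := hA
  let ar : ι₁ ⊕ ι₂ → ℕ := Sum.elim ar₁ ar₂
  let f : ∀ i, PartialFunOn K (ar i) := fun i => match i with
    | Sum.inl i => f₁ i
    | Sum.inr i => f₂ i
  obtain ⟨C, hC, e', tot⟩ := ext_total hK ar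
    (fun i => match i with
      | Sum.inl i => ha₁ i
      | Sum.inr i => ha₂ i) f
    (fun i => match i with
      | Sum.inl i => hf₁ i
      | Sum.inr i => hf₂ i) (algReduct B) hB
  have tot₁ : ∀ i x, (f₁ i C hC x).Dom := fun i x => tot (Sum.inl i) x
  refine ⟨C, hC, tot₁, fun i x => tot (Sum.inr i) x, ?_⟩
  let h : B.carrier →[L.sum (newLang ar₁)] (expandAlg ar₁ f₁ C hC tot₁).carrier :=
    { toFun := fun b => e' b
      map_fun' := by
        rintro n (s | ⟨i, rfl⟩) x
        · exact e'.map_fun s x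
        · have h1 := (hf₁ i).1 _ _ hB hC e'.toHom x _ (hBf i x)
          exact Part.mem_unique h1 (Part.get_mem (tot₁ i _))
      map_rel' := fun r => isEmptyElim r }
  exact ⟨(Embedding.ofInjective (f := h) e'.injective).comp e⟩

theorem half [L.IsAlgebraic] {K : Set (Alg L)} (hK : IsQuasivariety K) {ι₁ ι₂ : Type u}
    (ar₁ : ι₁ → ℕ) (ar₂ : ι₂ → ℕ)
    (f₁ : ∀ i, PartialFunOn K (ar₁ i)) (f₂ : ∀ i, PartialFunOn K (ar₂ i))
    (ha₁ : ∀ i, 0 < ar₁ i) (ha₂ : ∀ i, 0 < ar₂ i)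
    (hf₁ : ∀ i, InExtPP (f₁ i)) (hf₂ : ∀ i, InExtPP (f₂ i))
    (t : ∀ i, (L.sum (newLang ar₁)).Term (Fin (ar₂ i)))
    (ht : ∀ i, ∀ B ∈ expClass K ar₁ f₁, ∀ (hB : algReduct B ∈ K)
      (x : Fin (ar₂ i) → B.carrier) (b : B.carrier),
      b ∈ f₂ i (algReduct B) hB x → (t i).realize x = b)
    (t' : ∀ i, (L.sum (newLang ar₂)).Term (Fin (ar₁ i)))
    (ht' : ∀ i, ∀ B ∈ expClass K ar₂ f₂, ∀ (hB : algReduct B ∈ K)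
      (x : Fin (ar₁ i) → B.carrier) (b : B.carrier),
      b ∈ f₁ i (algReduct B) hB x → (t' i).realize x = b)
    (A : Alg (L.sum (newLang ar₁))) (hA : A ∈ SClosure (expClass K ar₁ f₁)) :
    reinterpret (transl t) A ∈ SClosure (expClass K ar₂ f₂) ∧
      reinterpret (transl t') (reinterpret (transl t) A) = A := by
  obtain ⟨C, hC, tot₁, tot₂, ⟨e⟩⟩ := emb_expand hK ar₁ ar₂ f₁ f₂ ha₁ ha₂ hf₁ hf₂ A hA
  have E := reinterpret_expand ar₁ ar₂ f₁ f₂ t ht C hC tot₁ tot₂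
  have E' := reinterpret_expand ar₂ ar₁ f₂ f₁ t' ht' C hC tot₂ tot₁
  obtain ⟨e₂, he₂⟩ := reinterpret_emb (transl t) e
  constructor
  · refine ⟨expandAlg ar₂ f₂ C hC tot₂, expandAlg_mem ar₂ f₂ C hC tot₂, ?_⟩
    rw [← E]
    exact ⟨e₂⟩
  · obtain ⟨e₃, he₃⟩ := reinterpret_emb (transl t') e₂
    refine alg_ext_fun _ _ ?_
    intro n s x
    apply e.injective
    have h1 := e.map_fun s x
    have h2 := e₃.map_fun s x
    have h3 : ∀ a, e₃ a = e a := fun a => (he₃ a).trans (he₂ a)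
    have E'' : reinterpret (transl t') (reinterpret (transl t) (expandAlg ar₁ f₁ C hC tot₁)) =
        expandAlg ar₁ f₁ C hC tot₁ := by rw [E, E']
    have h4 : (reinterpret (transl t') (reinterpret (transl t)
        (expandAlg ar₁ f₁ C hC tot₁))).str = (expandAlg ar₁ f₁ C hC tot₁).str := by
      exact eq_of_heq (congr_arg_heq (fun X : Alg (L.sum (newLang ar₁)) => X.str) E'')
    refine ((h3 _).symm.trans h2).trans (Eq.trans ?_ h1.symm)
    have h5 : e₃ ∘ x = e ∘ x := funext fun j => h3 (x j)
    rw [h5]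
    exact congrFun (congrArg (fun S : (L.sum (newLang ar₁)).Structure C.carrier =>
      S.funMap s) h4) (e ∘ x)

end Helpers

/-- All the Beth companions of a quasivariety `K` are faithfully term
equivalent relative to `K`. -/
theorem statement_14 {L : FirstOrder.Language.{u, u}} [L.IsAlgebraic]
    {K : Set (Alg L)} (hK : IsQuasivariety K)
    {ι₁ ι₂ : Type u} (ar₁ : ι₁ → ℕ) (ar₂ : ι₂ → ℕ)
    (f₁ : ∀ i, PartialFunOn K (ar₁ i)) (f₂ : ∀ i, PartialFunOn K (ar₂ i))
    (M₁ : Set (Alg (L.sum (newLang ar₁)))) (M₂ : Set (Alg (L.sum (newLang ar₂))))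
    (h₁ : IsBethCompanionVia K ar₁ f₁ M₁) (h₂ : IsBethCompanionVia K ar₂ f₂ M₂) :
    FaithfullyTermEquivRel L M₁ M₂ := by
  have H₁ := h₁
  have H₂ := h₂
  obtain ⟨⟨ha₁, hf₁, rfl⟩, -⟩ := h₁
  obtain ⟨⟨ha₂, hf₂, rfl⟩, -⟩ := h₂
  choose t ht using fun i => single_term hK H₁ (ha₂ i) (f₂ i) (hf₂ i)
  choose t' ht' using fun i => single_term hK H₂ (ha₁ i) (f₁ i) (hf₁ i)
  have a := half hK ar₁ ar₂ f₁ f₂ ha₁ ha₂ hf₁ hf₂ t ht t' ht'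
  have b := half hK ar₂ ar₁ f₂ f₁ ha₂ ha₁ hf₂ hf₁ t' ht' t ht
  exact ⟨transl t', transl t, fun _ _ => rfl, fun _ _ => rfl, fun A hA => (a A hA).1,
    fun B hB => (b B hB).1, fun A hA => (a A hA).2, fun B hB => (b B hB).2⟩

end Impl
end
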